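/- arXiv:1611.05314 — 3 statements merged into one kernel-verified Lean document; each statement's English description precedes it below -/
import Mathlib

section
/- Let v, a, c ∈ ℝ^n and suppose that for all i, j, a_i ≤ a_j implies c_i ≤ c_j. Let P = P_{n−1}(v), and for w ∈ ℝ^n let F(w) = {x ∈ P : ∀ y ∈ P, w·y ≤ w·x}, where w·x = ∑_{i=0}^{n−1} w_i x_i. Then F(a) ⊆ F(c). -/
open Pointwise

noncomputable section

/-- The simplex Δ_F ⊆ ℝ^n for F ⊆ {0,…,n−1}. -/
def stdSimplexOn (n : ℕ) (F : Finset (Fin n)) : Set (Fin n → ℝ) :=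
  {x | (∀ i, 0 ≤ x i) ∧ (∀ i, i ∉ F → x i = 0) ∧ ∑ i, x i = 1}

/-- The general permutahedron Π_{n−1}(k−1) ⊆ ℝ^n, Minkowski sum of all Δ_F with |F| = k. -/
def genPerm (n k : ℕ) : Set (Fin n → ℝ) :=
  ∑ F ∈ Finset.univ.powersetCard k, stdSimplexOn n F

/-- P_{n−1}(v): convex hull of the orbit of v under coordinate permutations. -/
def permPoly {n : ℕ} (v : Fin n → ℝ) : Set (Fin n → ℝ) :=
  convexHull ℝ {w | ∃ σ : Equiv.Perm (Fin n), w = v ∘ σ}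

/-- Dimension of a subset of ℝ^n : dimension of its affine span. -/
def setDim {n : ℕ} (S : Set (Fin n → ℝ)) : ℕ :=
  Module.finrank ℝ (affineSpan ℝ S).direction

/-- Nonempty exposed face of P : the maximizer set of some linear functional. -/
def IsExpFace {n : ℕ} (P A : Set (Fin n → ℝ)) : Prop :=
  A.Nonempty ∧ ∃ L : (Fin n → ℝ) →ₗ[ℝ] ℝ, A = {x ∈ P | ∀ y ∈ P, L y ≤ L x}

/-- Stirling numbers of the second kind. -/
def stirling2 : ℕ → ℕ → ℕ
  | 0, 0 => 1
  | 0, _ + 1 => 0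
  | _ + 1, 0 => 0
  | n + 1, k + 1 => (k + 1) * stirling2 n (k + 1) + stirling2 n k

/-- i-th backward difference of u at position k. -/
def bdiff {n : ℕ} (u : Fin n → ℝ) (i : ℕ) (k : Fin n) : ℝ :=
  ∑ j ∈ Finset.range (i + 1), (-1 : ℝ) ^ j * (i.choose j) *
    u ⟨(k : ℕ) - j, lt_of_le_of_lt (Nat.sub_le _ _) k.isLt⟩

/-- The number of chains A_1 ⊆ ⋯ ⊆ A_ℓ of nonempty exposed faces of P with dim A_i = s i. -/
def flagCount {n : ℕ} (P : Set (Fin n → ℝ)) (l : ℕ) (s : Fin l → ℕ) : ℕ :=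
  Nat.card {A : Fin l → Set (Fin n → ℝ) //
    (∀ i, IsExpFace P (A i) ∧ setDim (A i) = s i) ∧ ∀ i j, i ≤ j → A i ⊆ A j}

/-- The exponential (l+1)-flag polynomial of P ⊆ ℝ^n (a polytope of dimension n−1). -/
def xiFlag {n : ℕ} (P : Set (Fin n → ℝ)) (l : ℕ) (x : Fin (l + 1) → ℝ) : ℝ :=
  ∑ s : Fin (l + 1) → Fin n, if Monotone s then
    ((flagCount P (l + 1) (fun i => (s i : ℕ)) : ℝ) / (Nat.factorial (n - (s 0 : ℕ)))) *
      ∏ i : Fin (l + 1), x i ^ (if (i : ℕ) = 0 then (s i : ℕ) else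
        (s i : ℕ) - (s ⟨(i : ℕ) - 1, lt_of_le_of_lt (Nat.sub_le _ _) i.isLt⟩ : ℕ))
  else 0

/-- The standard permutahedron Π_{n−1} ⊆ ℝ^n. -/
def stdPermutahedron (n : ℕ) : Set (Fin n → ℝ) :=
  convexHull ℝ {w | ∃ σ : Equiv.Perm (Fin n), ∀ i, w i = ((σ i : ℕ) : ℝ) + 1}

/-- E_m(t) = ∑_{j=0}^m t^j/j!, the degree-m Taylor polynomial of exp. -/
def Etaylor (m : ℕ) (t : ℝ) : ℝ :=
  ∑ j ∈ Finset.range (m + 1), t ^ j / (Nat.factorial j)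

end

/-!
Writing `w ⬝ᵥ x` for the functional, sort `v` along `a`: by the rearrangement inequality, the
resulting vertex `p` maximizes `b ⬝ᵥ ·` over the polytope for every `b` whose order is refined by
that of `a`. This applies to `a`, to `c`, and also to `C • a - c` once `C` dominates the finitely
many slopes `(c j - c i) / (a j - a i)` with `a i < a j`. A point `x` of the face of `a` satisfies
`a ⬝ᵥ x = a ⬝ᵥ p`, so optimality of `p` for `C • a - c` gives `c ⬝ᵥ p ≤ c ⬝ᵥ x`, and `x` is as good
as `p` for `c`.
-/

section OrderRefines

variable {ι α β γ : Type*}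

/-- The order that `a` induces on its index type refines the one induced by `c`: the
relation between weight vectors under which the face of `a` is contained in that of `c`. Ties of
`a` have to be ties of `c`, which makes this stronger than `Monovary c a`. -/
def OrderRefines [LE α] [LE β] (a : ι → α) (c : ι → β) : Prop :=
  ∀ i j, a i ≤ a j → c i ≤ c j

theorem OrderRefines.refl [LE α] (a : ι → α) : OrderRefines a a := fun _ _ => id

theorem OrderRefines.monovary [LinearOrder α] [Preorder β] [Preorder γ] {a : ι → α} {c : ι → β}
    {u : ι → γ} (hac : OrderRefines a c) (hu : Monovary u a) : Monovary u c :=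
  fun _ _ hc => hu (not_le.1 fun ha => hc.not_ge (hac _ _ ha))

theorem OrderRefines.exists_smul_sub {𝕜 : Type*} [Finite ι] [Field 𝕜] [LinearOrder 𝕜]
    [IsStrictOrderedRing 𝕜] {a c : ι → 𝕜} (hac : OrderRefines a c) :
    ∃ C : 𝕜, OrderRefines a (C • a - c) := by
  obtain ⟨C, hC⟩ := (Set.finite_range fun p : ι × ι => (c p.2 - c p.1) / (a p.2 - a p.1)).bddAbove
  refine ⟨C, fun i j hij => ?_⟩
  suffices c j - c i ≤ C * (a j - a i) by
    simp only [Pi.sub_apply, Pi.smul_apply, smul_eq_mul]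
    linarith
  rcases hij.eq_or_lt with htie | hlt
  · simpa [htie] using hac j i htie.ge
  · exact (div_le_iff₀ (sub_pos.2 hlt)).1 (hC ⟨(i, j), rfl⟩)

end OrderRefines

section Sorting

variable {ι α β : Type*} [Finite ι] [LinearOrder α] [LinearOrder β]

theorem exists_equiv_monotone_comp (f : ι → α) : ∃ e : Fin (Nat.card ι) ≃ ι, Monotone (f ∘ e) :=
  let e := (Finite.equivFin ι).symm
  ⟨(Tuple.sort (f ∘ e)).trans e, Tuple.monotone_sort (f ∘ e)⟩

theorem exists_perm_monovary_comp (f : ι → α) (g : ι → β) :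
    ∃ σ : Equiv.Perm ι, Monovary (f ∘ σ) g := by
  obtain ⟨e, he⟩ := exists_equiv_monotone_comp f
  obtain ⟨d, hd⟩ := exists_equiv_monotone_comp g
  refine ⟨d.symm.trans e, ?_⟩
  simpa [Function.comp_assoc] using (he.monovary hd).comp_right d.symm

end Sorting

section PermFace

variable {ι R : Type*} [CommRing R] [LinearOrder R]

/-- The convex hull of the coordinate permutations of `v`: `permPoly` for an arbitrary index
type and an arbitrary linearly ordered commutative ring. -/
def permHull (v : ι → R) : Set (ι → R) :=
  convexHull R {w | ∃ σ : Equiv.Perm ι, w = v ∘ σ}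

variable [Fintype ι]

/-- The face of `permHull v` on which the linear functional with coefficients `w` is maximal. -/
def permFace (v w : ι → R) : Set (ι → R) :=
  {x ∈ permHull v | ∀ y ∈ permHull v, w ⬝ᵥ y ≤ w ⬝ᵥ x}

variable [IsStrictOrderedRing R]

theorem comp_perm_mem_permFace {v w : ι → R} {σ : Equiv.Perm ι} (h : Monovary (v ∘ σ) w) :
    v ∘ σ ∈ permFace v w := by
  refine ⟨subset_convexHull R _ ⟨σ, rfl⟩, fun y hy => ?_⟩
  have hconvex : Convex R {y | w ⬝ᵥ y ≤ w ⬝ᵥ (v ∘ σ)} :=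
    convex_halfSpace_le ⟨dotProduct_add w, fun r => dotProduct_smul r w⟩ _
  refine convexHull_min ?_ hconvex hy
  rintro _ ⟨τ, rfl⟩
  simpa [dotProduct] using h.symm.sum_mul_comp_perm_le_sum_mul (σ := τ.trans σ.symm)

theorem exists_forall_orderRefines_mem_permFace (v a : ι → R) :
    ∃ p, ∀ b, OrderRefines a b → p ∈ permFace v b := by
  obtain ⟨σ, hσ⟩ := exists_perm_monovary_comp v a
  exact ⟨v ∘ σ, fun _ hb => comp_perm_mem_permFace (hb.monovary hσ)⟩

end PermFace

theorem face_subset_of_order_refines_general {ι 𝕜 : Type*} [Fintype ι] [Field 𝕜] [LinearOrder 𝕜]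
    [IsStrictOrderedRing 𝕜] {v a c : ι → 𝕜} (hac : OrderRefines a c) :
    permFace v a ⊆ permFace v c := by
  rintro x ⟨hx, hxa⟩
  obtain ⟨p, hp⟩ := exists_forall_orderRefines_mem_permFace v a
  obtain ⟨C, hC⟩ := hac.exists_smul_sub
  have hxp : a ⬝ᵥ x = a ⬝ᵥ p :=
    le_antisymm ((hp a (.refl a)).2 x hx) (hxa p (hp a (.refl a)).1)
  have hpx : c ⬝ᵥ p ≤ c ⬝ᵥ x := by
    have hslope := (hp _ hC).2 x hx
    rw [sub_dotProduct, sub_dotProduct, smul_dotProduct, smul_dotProduct, hxp] at hslope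
    exact (sub_le_sub_iff_left _).1 hslope
  exact ⟨hx, fun y hy => ((hp c hac).2 y hy).trans hpx⟩

/-- if the order of a refines that of c
(a_i ≤ a_j ⇒ c_i ≤ c_j), then the exposed face of P_{n−1}(v) determined by a
is contained in the one determined by c. -/
theorem face_subset_of_order_refines (n : ℕ) (v a c : Fin n → ℝ)
    (hac : ∀ i j : Fin n, a i ≤ a j → c i ≤ c j) :
    {x ∈ permPoly v | ∀ y ∈ permPoly v, ∑ i, a i * y i ≤ ∑ i, a i * x i}
      ⊆ {x ∈ permPoly v | ∀ y ∈ permPoly v, ∑ i, c i * y i ≤ ∑ i, c i * x i} :=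
  face_subset_of_order_refines_general hac
end

section
/- Let v, a ∈ ℝ^n be nondecreasing (v_0 ≤ ⋯ ≤ v_{n−1} and a_0 ≤ ⋯ ≤ a_{n−1}), and suppose a is v-reduced: for every two adjacent values s < t in the range of a (s, t values of a with no value of a strictly between them), v is not constant on {i : a_i = s or a_i = t}. Let c ∈ ℝ^n, let P = P_{n−1}(v), and for w ∈ ℝ^n let F(w) = {x ∈ P : ∀ y ∈ P, w·y ≤ w·x}, where w·x = ∑_{i=0}^{n−1} w_i x_i. Then F(a) ⊆ F(c) if and only if both of the following hold: (1) for all i, j, a_i < a_j implies c_i ≤ c_j; and (2) for every value t of a such that v is not constant on X_t = {i : a_i = t}, c is constant on X_t. -/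
open Pointwise

/-!
A linear functional is maximal on a convex hull exactly on the hull of the generators where it is
maximal, so `F(a) ⊆ F(c)` can be tested on the rearrangements of `v`. By the rearrangement
inequality `v ∘ σ` lies in `F(w)` iff `w` and `v ∘ σ` monovary. The rearrangements monovarying with
`a` are the `v ∘ τ` with `a ∘ τ = a`, and such a `τ` can carry two distinct indices to any two
distinct indices of the same `a`-levels. Hence `F(a) ⊆ F(c)` iff `c i ≤ c j` whenever the `a`-levels
of `i` and `j` contain `p` and `q`, respectively, with `v p < v q`. Reducedness provides such `p`
and `q` as soon as `a i < a j`: otherwise `v` would be constant on all the levels from `a i` to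
`a j`, in particular on two adjacent ones.
-/

open Equiv

section MaxFace

/-- The face of `s` on which `f` is maximal; for linear `f` this is `F(w)` with `f x = w·x`. -/
def maxFace {E 𝕜 : Type*} [LE 𝕜] (f : E → 𝕜) (s : Set E) : Set E :=
  {x ∈ s | ∀ y ∈ s, f y ≤ f x}

variable {𝕜 E : Type*} [CommRing 𝕜] [LinearOrder 𝕜] [IsStrictOrderedRing 𝕜] [AddCommMonoid E]
  [Module 𝕜 E] {s K : Set E} {x : E}

lemma convex_maxFace (hs : Convex 𝕜 s) (f : E →ₗ[𝕜] 𝕜) : Convex 𝕜 (maxFace f s) := by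
  intro x hx y hy α β hα hβ hαβ
  refine ⟨hs hx.1 hy.1 hα hβ hαβ, fun z hz => ?_⟩
  calc f z = α * f z + β * f z := by rw [← add_mul, hαβ, one_mul]
    _ ≤ α * f x + β * f y := by gcongr; exacts [hx.2 z hz, hy.2 z hz]
    _ = f (α • x + β • y) := by simp

lemma mem_maxFace_convexHull_iff (f : E →ₗ[𝕜] 𝕜) (hx : x ∈ s) :
    x ∈ maxFace f (convexHull 𝕜 s) ↔ x ∈ maxFace f s :=
  ⟨fun h => ⟨hx, fun y hy => h.2 y (subset_convexHull 𝕜 s hy)⟩,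
    fun h => ⟨subset_convexHull 𝕜 s hx, convexHull_min h.2 (convex_halfSpace_le f.isLinear (f x))⟩⟩

lemma convex_setOf_le_and_mem_of_eq (hK : Convex 𝕜 K) (f : E →ₗ[𝕜] 𝕜) (M : 𝕜) :
    Convex 𝕜 {x | f x ≤ M ∧ (f x = M → x ∈ K)} := by
  rw [convex_iff_forall_pos]
  rintro x ⟨hxM, hxK⟩ y ⟨hyM, hyK⟩ α β hα hβ hαβ
  have hM : α * M + β * M = M := by rw [← add_mul, hαβ, one_mul]
  have hfx : α * f x ≤ α * M := by gcongr
  have hfy : β * f y ≤ β * M := by gcongr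
  simp only [Set.mem_ofPred_eq, map_add, map_smul, smul_eq_mul]
  refine ⟨by linarith, fun h => hK (hxK ?_) (hyK ?_) hα.le hβ.le hαβ⟩
  · exact mul_left_cancel₀ hα.ne' (by linarith)
  · exact mul_left_cancel₀ hβ.ne' (by linarith)

lemma maxFace_convexHull_subset_iff (hK : Convex 𝕜 K) (f : E →ₗ[𝕜] 𝕜) :
    maxFace f (convexHull 𝕜 s) ⊆ K ↔ maxFace f s ⊆ K := by
  refine ⟨fun h x hx => h ((mem_maxFace_convexHull_iff f hx.1).2 hx), fun h x hx => ?_⟩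
  have hs : s ⊆ {y | f y ≤ f x ∧ (f y = f x → y ∈ K)} := fun y hy =>
    ⟨hx.2 y (subset_convexHull 𝕜 s hy), fun hyx =>
      h ⟨hy, fun z hz => hyx ▸ hx.2 z (subset_convexHull 𝕜 s hz)⟩⟩
  exact (convexHull_min hs (convex_setOf_le_and_mem_of_eq hK f (f x)) hx.1).2 rfl

theorem maxFace_convexHull_subset_maxFace_convexHull_iff (f g : E →ₗ[𝕜] 𝕜) :
    maxFace f (convexHull 𝕜 s) ⊆ maxFace g (convexHull 𝕜 s) ↔ maxFace f s ⊆ maxFace g s := by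
  rw [maxFace_convexHull_subset_iff (convex_maxFace (convex_convexHull 𝕜 s) g) f]
  exact forall₂_congr fun _ hx => mem_maxFace_convexHull_iff g hx.1

end MaxFace

section Rearrangements

/-- The orbit of `v` under permutations of the coordinates, written as in `permPoly`. -/
def rearrangements {ι α : Type*} (v : ι → α) : Set (ι → α) :=
  {w | ∃ σ : Perm ι, w = v ∘ σ}

lemma dotProduct_sub_dotProduct_comp_swap {ι R : Type*} [Fintype ι] [DecidableEq ι] [CommRing R]
    (w x : ι → R) (i j : ι) : w ⬝ᵥ x - w ⬝ᵥ (x ∘ swap i j) = (w j - w i) * (x j - x i) := by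
  obtain rfl | hij := eq_or_ne i j
  · simp
  rw [← dotProduct_sub, dotProduct, Fintype.sum_eq_add i j hij]
  · simp only [Pi.sub_apply, Function.comp_apply, swap_apply_left, swap_apply_right]
    ring
  · rintro k ⟨hki, hkj⟩
    simp [swap_apply_of_ne_of_ne hki hkj]

variable {ι 𝕜 : Type*} [Fintype ι] [CommRing 𝕜] [LinearOrder 𝕜] [IsStrictOrderedRing 𝕜]

lemma comp_perm_mem_maxFace_rearrangements_iff {v w : ι → 𝕜} {σ : Perm ι} :
    v ∘ σ ∈ maxFace (dotProductBilin 𝕜 𝕜 w) (rearrangements v) ↔ Monovary w (v ∘ σ) := by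
  classical
  constructor
  · rintro ⟨-, hmax⟩ i j hlt
    have hswap : w ⬝ᵥ ((v ∘ σ) ∘ swap i j) ≤ w ⬝ᵥ (v ∘ σ) := hmax _ ⟨σ * swap i j, rfl⟩
    have hprod : 0 ≤ (w j - w i) * ((v ∘ σ) j - (v ∘ σ) i) :=
      dotProduct_sub_dotProduct_comp_swap w (v ∘ σ) i j ▸ sub_nonneg.2 hswap
    exact sub_nonneg.1 (nonneg_of_mul_nonneg_left hprod (sub_pos.2 hlt))
  · refine fun h => ⟨⟨σ, rfl⟩, ?_⟩
    rintro _ ⟨ρ, rfl⟩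
    have hle := h.sum_mul_comp_perm_le_sum_mul (σ := σ⁻¹ * ρ)
    simpa [dotProduct] using hle

theorem maxFace_subset_maxFace_iff_forall_perm {v a c : ι → 𝕜} :
    maxFace (dotProductBilin 𝕜 𝕜 a) (convexHull 𝕜 (rearrangements v)) ⊆
        maxFace (dotProductBilin 𝕜 𝕜 c) (convexHull 𝕜 (rearrangements v)) ↔
      ∀ σ : Perm ι, Monovary a (v ∘ σ) → Monovary c (v ∘ σ) := by
  simp only [maxFace_convexHull_subset_maxFace_convexHull_iff,
    ← comp_perm_mem_maxFace_rearrangements_iff]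
  refine ⟨fun h σ hσ => h hσ, fun h x hx => ?_⟩
  obtain ⟨σ, rfl⟩ := hx.1
  exact h σ hx

end Rearrangements

section Monovary

variable {ι α β γ : Type*}

lemma exists_perm_apply_eq_of_apply_eq {f : ι → α} {i j p q : ι} (hij : i ≠ j)
    (hpq : p ≠ q) (hi : f p = f i) (hj : f q = f j) :
    ∃ τ : Perm ι, f ∘ τ = f ∧ τ i = p ∧ τ j = q := by
  classical
  have hj' : f (swap i p j) = f q := (apply_swap_eq_self hi.symm j).trans hj.symm
  refine ⟨swap (swap i p j) q * swap i p, funext fun k => ?_, ?_, by simp⟩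
  · exact (apply_swap_eq_self hj' _).trans (apply_swap_eq_self hi.symm k)
  · have hp : p ≠ swap i p j := fun h => hij ((swap i p).injective (by simpa using h))
    simp [swap_apply_of_ne_of_ne hp hpq]

lemma comp_equiv_eq_of_monotone [PartialOrder α] {n : ℕ} {f : ι → α} {e₁ e₂ : Fin n ≃ ι}
    (h₁ : Monotone (f ∘ e₁)) (h₂ : Monotone (f ∘ e₂)) : f ∘ e₁ = f ∘ e₂ := by
  have h := Tuple.unique_monotone (f := f ∘ e₁) (σ := 1) (τ := e₂.trans e₁.symm)
    h₁ (by simpa [Function.comp_def] using h₂)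
  simpa [Function.comp_def] using h

variable [Finite ι] [LinearOrder α] [LinearOrder β]

lemma exists_equiv_fin_monotone_of_monovary {f : ι → α} {g : ι → β} (h : Monovary f g) :
    ∃ e : Fin (Nat.card ι) ≃ ι, Monotone (f ∘ e) ∧ Monotone (g ∘ e) := by
  obtain ⟨_, hf, hg⟩ := h.exists_monotone
  have := Fintype.ofFinite ι
  let e := monoEquivOfFin ι (Nat.card_eq_fintype_card (α := ι)).symm
  exact ⟨e.toEquiv, hf.comp e.monotone, hg.comp e.monotone⟩

theorem monovary_comp_perm_iff {f : ι → α} {g : ι → β} (h : Monovary f g) {σ : Perm ι} :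
    Monovary f (g ∘ σ) ↔ ∃ τ : Perm ι, f ∘ τ = f ∧ g ∘ τ = g ∘ σ := by
  constructor
  · intro hσ
    obtain ⟨e, hfe, hge⟩ := exists_equiv_fin_monotone_of_monovary h
    obtain ⟨e', hfe', hge'⟩ := exists_equiv_fin_monotone_of_monovary hσ
    have hf : f ∘ e = f ∘ e' := comp_equiv_eq_of_monotone hfe hfe'
    have hg : g ∘ e = g ∘ (e'.trans σ) := comp_equiv_eq_of_monotone hge hge'
    refine ⟨e'.symm.trans e, funext fun k => ?_, funext fun k => ?_⟩
    · simpa using congrFun hf (e'.symm k)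
    · simpa using congrFun hg (e'.symm k)
  · rintro ⟨τ, hf, hg⟩
    simpa only [hf, hg] using h.comp_right τ

variable [Preorder γ] {v : ι → β} {a : ι → α} {c : ι → γ}

theorem forall_perm_monovary_imp_monovary_iff (hav : Monovary a v) :
    (∀ σ : Perm ι, Monovary a (v ∘ σ) → Monovary c (v ∘ σ)) ↔
      ∀ i j p q, a p = a i → a q = a j → v p < v q → c i ≤ c j := by
  constructor
  · intro h i j p q hp hq hlt
    obtain rfl | hij := eq_or_ne i j
    · exact le_rfl
    have hpq : p ≠ q := fun hpq => hlt.ne (congrArg v hpq)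
    obtain ⟨τ, hτ, rfl, rfl⟩ := exists_perm_apply_eq_of_apply_eq hij hpq hp hq
    exact h τ ((monovary_comp_perm_iff hav).2 ⟨τ, hτ, rfl⟩) hlt
  · intro h σ hσ i j hlt
    obtain ⟨τ, ha, hv⟩ := (monovary_comp_perm_iff hav).1 hσ
    rw [← hv] at hlt
    exact h i j (τ i) (τ j) (congrFun ha i) (congrFun ha j) hlt

end Monovary

section Reduced

variable {ι α β γ : Type*}

/-- `a` is `v`-reduced: `v` is not constant on the union of the level sets of two adjacent values
`s < t` of `a`. Adjacency means that no value of `a` lies strictly between `s` and `t`. -/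
def IsReducedFor [LT α] (v : ι → β) (a : ι → α) : Prop :=
  ∀ s t : α, (∃ i, a i = s) → (∃ j, a j = t) → s < t → (∀ l, ¬(s < a l ∧ a l < t)) →
    ∃ i j, (a i = s ∨ a i = t) ∧ (a j = s ∨ a j = t) ∧ v i ≠ v j

variable [Finite ι] [LinearOrder α] [LinearOrder β] {v : ι → β} {a : ι → α}

lemma exists_lt_of_isReducedFor (hav : Monovary a v) (hred : IsReducedFor v a) {i j : ι}
    (hij : a i < a j) : ∃ p q, a p = a i ∧ a q = a j ∧ v p < v q := by
  by_contra! hle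
  have hconst : ∀ k, a i ≤ a k → a k ≤ a j → v k = v i := by
    intro k hik hkj
    have hvij : v i ≤ v j := hav.symm hij
    apply le_antisymm
    · obtain hkj | hkj := hkj.lt_or_eq
      · exact (hav.symm hkj).trans (hle i j rfl rfl)
      · exact hle i k rfl hkj
    · obtain hik | hik := hik.lt_or_eq
      · exact hav.symm hik
      · exact hvij.trans (hle k j hik.symm rfl)
  obtain ⟨l, hil, hmin⟩ := (Set.toFinite {k | a i < a k}).exists_minimalFor a _ ⟨j, hij⟩
  have hlmin : ∀ k, a i < a k → a l ≤ a k := fun k hk =>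
    le_of_not_gt fun hkl => (hmin hk hkl.le).not_gt hkl
  have hlevels : ∀ k, a k = a i ∨ a k = a l → v k = v i := by
    rintro k (hk | hk)
    · exact hconst k hk.ge (hk.trans_le hij.le)
    · exact hconst k (hil.le.trans hk.ge) (hk.trans_le (hlmin j hij))
  obtain ⟨p, q, hp, hq, hne⟩ := hred (a i) (a l) ⟨i, rfl⟩ ⟨l, rfl⟩ hil
    fun k hk => (hlmin k hk.1).not_gt hk.2
  exact hne ((hlevels p hp).trans (hlevels q hq).symm)

theorem forall_le_iff_of_isReducedFor [PartialOrder γ] {c : ι → γ} (hav : Monovary a v)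
    (hred : IsReducedFor v a) :
    (∀ i j p q, a p = a i → a q = a j → v p < v q → c i ≤ c j) ↔
      (∀ i j, a i < a j → c i ≤ c j) ∧
        ∀ t : α, (∃ i, a i = t) → (∃ i j, a i = t ∧ a j = t ∧ v i ≠ v j) →
          ∀ i j, a i = t → a j = t → c i = c j := by
  constructor
  · refine fun h => ⟨fun i j hij => ?_, ?_⟩
    · obtain ⟨p, q, hp, hq, hlt⟩ := exists_lt_of_isReducedFor hav hred hij
      exact h i j p q hp hq hlt
    · rintro t - ⟨p, q, rfl, hq, hne⟩ i j hi hj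
      obtain hlt | hlt := hne.lt_or_gt
      · exact le_antisymm (h i j p q hi.symm (hq.trans hj.symm) hlt)
          (h j i p q hj.symm (hq.trans hi.symm) hlt)
      · exact le_antisymm (h i j q p (hq.trans hi.symm) hj.symm hlt)
          (h j i q p (hq.trans hj.symm) hi.symm hlt)
  · rintro ⟨hstrict, hlevel⟩ i j p q hp hq hlt
    have hij : a i ≤ a j := hp ▸ hq ▸ hav hlt
    obtain hij | hij := hij.lt_or_eq
    · exact hstrict i j hij
    · exact (hlevel (a j) ⟨j, rfl⟩ ⟨p, q, hp.trans hij, hq, hlt.ne⟩ i j hij rfl).le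

end Reduced

theorem face_subset_iff_of_reduced_general {ι 𝕜 : Type*} [Fintype ι] [CommRing 𝕜] [LinearOrder 𝕜]
    [IsStrictOrderedRing 𝕜] {v a c : ι → 𝕜} (hav : Monovary a v) (hred : IsReducedFor v a) :
    maxFace (dotProductBilin 𝕜 𝕜 a) (convexHull 𝕜 (rearrangements v)) ⊆
        maxFace (dotProductBilin 𝕜 𝕜 c) (convexHull 𝕜 (rearrangements v)) ↔
      (∀ i j, a i < a j → c i ≤ c j) ∧
        ∀ t : 𝕜, (∃ i, a i = t) → (∃ i j, a i = t ∧ a j = t ∧ v i ≠ v j) →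
          ∀ i j, a i = t → a j = t → c i = c j :=
  maxFace_subset_maxFace_iff_forall_perm.trans <|
    (forall_perm_monovary_imp_monovary_iff hav).trans (forall_le_iff_of_isReducedFor hav hred)

/-- for nondecreasing v and nondecreasing v-reduced a, the face
of P_{n−1}(v) determined by a is contained in the one determined by c iff
(1) a_i < a_j ⇒ c_i ≤ c_j, and (2) c is constant on each level set X_t of a on
which v is not constant. -/
theorem face_subset_iff_of_reduced (n : ℕ) (v a c : Fin n → ℝ)
    (hv : Monotone v) (ha : Monotone a)
    (hred : ∀ s t : ℝ, (∃ i, a i = s) → (∃ j, a j = t) → s < t →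
      (∀ l : Fin n, ¬(s < a l ∧ a l < t)) →
      ∃ i j : Fin n, (a i = s ∨ a i = t) ∧ (a j = s ∨ a j = t) ∧ v i ≠ v j) :
    ({x ∈ permPoly v | ∀ y ∈ permPoly v, ∑ i, a i * y i ≤ ∑ i, a i * x i}
        ⊆ {x ∈ permPoly v | ∀ y ∈ permPoly v, ∑ i, c i * y i ≤ ∑ i, c i * x i})
      ↔ ((∀ i j : Fin n, a i < a j → c i ≤ c j) ∧
          (∀ t : ℝ, (∃ i, a i = t) →
            (∃ i j : Fin n, a i = t ∧ a j = t ∧ v i ≠ v j) →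
            ∀ i j : Fin n, a i = t → a j = t → c i = c j)) :=
  face_subset_iff_of_reduced_general (ha.monovary hv) hred
end

section
/- Fix an integer ℓ ≥ 1 and real numbers x_1, …, x_ℓ with x_1 ≠ 0 and S := x_2 + ⋯ + x_ℓ + 1 ≠ 0 (for ℓ = 1, S = 1). For each n ≥ 1 let Π_{n−1} ⊆ ℝ^n be the standard permutahedron, and let ξ^ℓ_{Π_{n−1}}(x_1,…,x_ℓ) be its exponential ℓ-flag polynomial. Then for every real y, the series ∑_{n≥1} ξ^ℓ_{Π_{n−1}}(x_1,…,x_ℓ)·y^n/n! converges absolutely and equals (e^{(S/x_1)(e^{x_1 y} − 1)} − 1)/S. -/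
open Pointwise

/-! The nonempty faces of a permutahedron with strictly increasing generating vector correspond,
inclusion reversed, to the chains of proper nonempty subsets of the coordinates: up to a constant,
a linear functional is a nonnegative combination of coordinate sums over the members of a maximal
chain, so its maximizers are the points at which those sums with positive weight are extremal. A
chain with `k` members gives a face of codimension `k`, by comparison with a maximal chain.

A flag of faces is thus a descending sequence of subchains of a chain `C`, and summing over all
subchains with `C` fixed gives `S ^ #C` by the binomial theorem. There are
`(k + 1)! * stirlingSecond n (k + 1)` chains with `k` members, so the weight `1 / (k + 1)!` turns
the flag polynomial into `x₁ ^ n / S` times the Touchard polynomial at `S / x₁`, and the exponential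
generating function of the Touchard polynomials at `z` is `exp (z * (exp y - 1))`. -/

section TouchardPolynomials

open Finset
open scoped Nat
open Nat (stirlingSecond)

lemma sum_range_succ_choose_mul_stirlingSecond (n k : ℕ) :
    ∑ j ∈ range (n + 1), n.choose j * stirlingSecond j k = stirlingSecond (n + 1) (k + 1) := by
  induction n generalizing k with
  | zero => cases k <;> simp [stirlingSecond]
  | succ n ih =>
    have pascal := sum_choose_succ_mul (fun j _ ↦ stirlingSecond j k) n
    simp only [Nat.cast_id] at pascal
    rw [pascal, ih]
    cases k with
    | zero => simp [Nat.stirlingSecond_succ_zero, Nat.stirlingSecond_one_right]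
    | succ k =>
      simp_rw [Nat.stirlingSecond_succ_succ _ k, mul_add, sum_add_distrib, mul_left_comm _ (k + 1),
        ← mul_sum, ih, Nat.stirlingSecond_succ_succ (n + 1) (k + 1)]
      ring

lemma sum_range_choose_mul_stirlingSecond (n k : ℕ) :
    ∑ j ∈ range n, n.choose j * stirlingSecond j k = (k + 1) * stirlingSecond n (k + 1) := by
  have h := sum_range_succ_choose_mul_stirlingSecond n k
  rw [sum_range_succ, Nat.choose_self, one_mul, Nat.stirlingSecond_succ_succ] at h
  exact Nat.add_right_cancel h

lemma hasSum_pow_div_factorial (y : ℝ) : HasSum (fun n : ℕ ↦ y ^ n / n !) (Real.exp y) :=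
  Real.exp_eq_exp_ℝ ▸ NormedSpace.expSeries_div_hasSum_exp y

lemma hasSum_stirlingSecond_succ_mul {k : ℕ} {y a : ℝ}
    (h : HasSum (fun n : ℕ ↦ stirlingSecond n k * y ^ n / n !) a) :
    HasSum (fun n : ℕ ↦ stirlingSecond (n + 1) (k + 1) * y ^ n / n !) (a * Real.exp y) := by
  have hexp := hasSum_pow_div_factorial y
  have hprod := hasSum_sum_range_mul_of_summable_norm h.summable.norm hexp.summable.norm
  rw [h.tsum_eq, hexp.tsum_eq] at hprod
  refine hprod.congr_fun fun n ↦ ?_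
  rw [← sum_range_succ_choose_mul_stirlingSecond, Nat.cast_sum, sum_mul, sum_div]
  refine sum_congr rfl fun j hj ↦ ?_
  have hj : j ≤ n := mem_range_succ_iff.1 hj
  rw [Nat.cast_mul, Nat.cast_choose ℝ hj, ← pow_mul_pow_sub y hj]
  field_simp

lemma hasSum_stirlingSecond_mul (k : ℕ) (y : ℝ) :
    HasSum (fun n : ℕ ↦ stirlingSecond n k * y ^ n / n !) ((Real.exp y - 1) ^ k / k !) := by
  induction k with
  | zero =>
    convert! hasSum_ite_eq 0 (1 : ℝ) using 2 with n
    · cases n <;> simp [Nat.stirlingSecond_succ_zero]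
    · simp
  | succ k ih =>
    have hdiff := ((hasSum_stirlingSecond_succ_mul ih).sub ih).div_const (k + 1 : ℝ)
    have hvalue : ((Real.exp y - 1) ^ k / k ! * Real.exp y - (Real.exp y - 1) ^ k / k !) / (k + 1)
        = (Real.exp y - 1) ^ (k + 1) / (k + 1)! := by
      rw [Nat.factorial_succ, Nat.cast_mul, Nat.cast_succ]
      field_simp
      ring
    rw [hvalue] at hdiff
    refine hdiff.congr_fun fun n ↦ ?_
    rw [Nat.stirlingSecond_succ_succ]
    push_cast
    field_simp
    ring

/-- The `n`-th Touchard polynomial, evaluated at `z`. -/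
def touchard {R : Type*} [Semiring R] (n : ℕ) (z : R) : R :=
  ∑ k ∈ range (n + 1), stirlingSecond n k * z ^ k

lemma hasSum_pow_mul_stirlingSecond (n : ℕ) (z y : ℝ) :
    HasSum (fun k ↦ z ^ k * (stirlingSecond n k * y ^ n / n !)) (touchard n z * y ^ n / n !) := by
  have hsupport : ∀ k ∉ range (n + 1), z ^ k * (stirlingSecond n k * y ^ n / n !) = 0 := by
    intro k hk
    rw [Nat.stirlingSecond_eq_zero_of_lt (by simpa using hk)]
    simp
  have hvalue : touchard n z * y ^ n / n ! =
      ∑ k ∈ range (n + 1), z ^ k * (stirlingSecond n k * y ^ n / n !) := by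
    rw [touchard, sum_mul, sum_div]
    exact sum_congr rfl fun k _ ↦ by ring
  exact hvalue ▸ hasSum_sum_of_ne_finset_zero hsupport

lemma summable_pow_mul_stirlingSecond (z y : ℝ) :
    Summable fun p : ℕ × ℕ ↦ z ^ p.1 * (stirlingSecond p.2 p.1 * y ^ p.2 / p.2 !) := by
  have hrow (k : ℕ) : HasSum (fun n : ℕ ↦ ‖z ^ k * (stirlingSecond n k * y ^ n / n !)‖)
      ((|z| * (Real.exp |y| - 1)) ^ k / k !) := by
    rw [mul_pow, mul_div_assoc]
    exact ((hasSum_stirlingSecond_mul k |y|).mul_left (|z| ^ k)).congr_fun fun n ↦ by simp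
  refine .of_norm ((summable_prod_of_nonneg fun _ ↦ norm_nonneg _).2
    ⟨fun k ↦ (hrow k).summable, ?_⟩)
  simp_rw [(hrow _).tsum_eq]
  exact Real.summable_pow_div_factorial _

lemma hasSum_touchard_mul (z y : ℝ) :
    HasSum (fun n ↦ touchard n z * y ^ n / n !) (Real.exp (z * (Real.exp y - 1))) := by
  have hF := (summable_pow_mul_stirlingSecond z y).hasSum
  have hrows := hF.prod_fiberwise fun k ↦ (hasSum_stirlingSecond_mul k y).mul_left (z ^ k)
  simp_rw [← mul_div_assoc (z ^ _) ((Real.exp y - 1) ^ _), ← mul_pow] at hrows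
  rw [hrows.unique (hasSum_pow_div_factorial _)] at hF
  exact ((Equiv.prodComm ℕ ℕ).hasSum_iff.2 hF).prod_fiberwise
    fun n ↦ hasSum_pow_mul_stirlingSecond n z y

lemma touchard_succ {R : Type*} [CommSemiring R] (n : ℕ) (z : R) :
    touchard (n + 1) z = z * ∑ k ∈ range (n + 1), stirlingSecond (n + 1) (k + 1) * z ^ k := by
  rw [touchard, sum_range_succ', Nat.stirlingSecond_succ_zero, mul_sum]
  simp only [pow_succ', mul_left_comm z, Nat.cast_zero, zero_mul, add_zero]

lemma pow_mul_touchard_succ {K : Type*} [Field K] (n : ℕ) {a : K} (ha : a ≠ 0) (b : K) :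
    a ^ (n + 1) * touchard (n + 1) (b / a) =
      b * ∑ k ∈ range (n + 1), stirlingSecond (n + 1) (k + 1) * (a ^ (n - k) * b ^ k) := by
  rw [touchard_succ, pow_succ, mul_sum, mul_sum, mul_sum]
  refine sum_congr rfl fun k hk ↦ ?_
  rw [← pow_sub_mul_pow a (mem_range_succ_iff.1 hk), div_pow]
  field_simp

lemma hasSum_touchard_succ_mul (z y : ℝ) :
    HasSum (fun n ↦ touchard (n + 1) z * y ^ (n + 1) / (n + 1)!)
      (Real.exp (z * (Real.exp y - 1)) - 1) := by
  simpa [touchard] using (hasSum_nat_add_iff' 1).2 (hasSum_touchard_mul z y)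

end TouchardPolynomials

section Geometry

open Finset

section TopSets

variable {n : ℕ}

/-- The coordinates at which the permutation `σ` takes its `k` largest values. -/
def topSet (σ : Equiv.Perm (Fin n)) (k : ℕ) : Finset (Fin n) :=
  {i | n ≤ σ i + k}

@[simp]
lemma mem_topSet {σ : Equiv.Perm (Fin n)} {k : ℕ} {i : Fin n} :
    i ∈ topSet σ k ↔ n ≤ σ i + k := by
  simp [topSet]

lemma topSet_eq_map (σ : Equiv.Perm (Fin n)) (k : ℕ) :
    topSet σ k = (topSet 1 k).map σ.symm.toEmbedding := by
  ext i
  simp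

lemma card_topSet (σ : Equiv.Perm (Fin n)) {k : ℕ} (hk : k ≤ n) : #(topSet σ k) = k := by
  have hvalues : (topSet (1 : Equiv.Perm (Fin n)) k).map Fin.valEmbedding = Ico (n - k) n := by
    ext j
    simp only [mem_map, mem_topSet, Equiv.Perm.one_apply, Fin.valEmbedding_apply, mem_Ico]
    exact ⟨fun ⟨i, _, hij⟩ ↦ by omega, fun hj ↦ ⟨⟨j, hj.2⟩, by simp; omega, rfl⟩⟩
  rw [topSet_eq_map, card_map, ← card_map Fin.valEmbedding, hvalues, Nat.card_Ico]
  omega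

lemma topSet_mono (σ : Equiv.Perm (Fin n)) : Monotone (topSet σ) := by
  intro j k hjk i hi
  rw [mem_topSet] at hi ⊢
  omega

lemma topSet_injOn (σ : Equiv.Perm (Fin n)) : Set.InjOn (topSet σ) (Set.Iic n) :=
  Set.LeftInvOn.injOn fun _ hk ↦ card_topSet σ hk

lemma exists_perm_topSet_ne (σ : Equiv.Perm (Fin n)) {k : ℕ} (hk₀ : 0 < k) (hkn : k < n) :
    ∃ τ : Equiv.Perm (Fin n), topSet τ k ≠ topSet σ k ∧ ∀ j ≠ k, topSet τ j = topSet σ j := by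
  let p : Fin n := ⟨n - k, by omega⟩
  let q : Fin n := ⟨n - k - 1, by omega⟩
  refine ⟨σ.trans (Equiv.swap p q), fun h ↦ ?_, fun j hj ↦ ?_⟩
  · have hp : σ.symm p ∈ topSet σ k := by simp [p]; omega
    rw [← h, mem_topSet, Equiv.trans_apply, Equiv.apply_symm_apply, Equiv.swap_apply_left] at hp
    simp only [q] at hp
    omega
  · ext i
    rw [mem_topSet, mem_topSet, Equiv.trans_apply, Equiv.swap_apply_def]
    split_ifs with hip hiq
    · simp only [hip, p, q]; omega
    · simp only [hiq, p, q]; omega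
    · rfl

/- Sort the points by the number of members of the chain containing them. -/
lemma exists_perm_topSet_card_eq {C : Finset (Finset (Fin n))}
    (hC : IsChain (· ⊆ ·) (C : Set (Finset (Fin n)))) :
    ∃ σ : Equiv.Perm (Fin n), ∀ T ∈ C, topSet σ #T = T := by
  let depth (i : Fin n) : ℕ := #{T ∈ C | i ∈ T}
  let σ : Equiv.Perm (Fin n) := (Tuple.sort depth).symm
  have depth_le {i j : Fin n} (hij : σ i ≤ σ j) : depth i ≤ depth j := by
    simpa [σ] using Tuple.monotone_sort depth hij
  have depth_lt {T : Finset (Fin n)} (hT : T ∈ C) {i j : Fin n} (hi : i ∈ T) (hj : j ∉ T) :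
      depth j < depth i := by
    refine card_lt_card (Finset.ssubset_iff_of_subset ?_ |>.2 ⟨T, by simp [hT, hi], by simp [hj]⟩)
    intro U hU
    rw [mem_filter] at hU ⊢
    refine ⟨hU.1, ?_⟩
    rcases hC.total hU.1 hT with hUT | hTU
    · exact absurd (hUT hU.2) hj
    · exact hTU hi
  refine ⟨σ, fun T hT ↦ ?_⟩
  have hcard : #(topSet σ #T) = #T := card_topSet σ (by simpa using card_le_univ T)
  by_cases hsub : T ⊆ topSet σ #T
  · exact (eq_of_subset_of_card_le hsub hcard.le).symm
  · obtain ⟨i, hiT, hi⟩ := not_subset.1 hsub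
    refine eq_of_subset_of_card_le (fun j hj ↦ ?_) hcard.ge
    by_contra hjT
    rw [mem_topSet] at hi hj
    exact (depth_lt hT hiT hjT).not_ge (depth_le (Fin.le_def.2 (by omega)))

/- The weights are the jumps of `c` along an ordering that sorts it. -/
lemma exists_perm_eq_add_sum_topSet (c : Fin n → ℝ) :
    ∃ (σ : Equiv.Perm (Fin n)) (a : ℝ) (g : ℕ → ℝ), (∀ k ∈ Ioo 0 n, 0 ≤ g k) ∧
      ∀ i, c i = a + ∑ k ∈ Ioo 0 n with i ∈ topSet σ k, g k := by
  let σ : Equiv.Perm (Fin n) := (Tuple.sort c).symm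
  let f (k : ℕ) : ℝ := if h : k < n then c (σ.symm ⟨k, h⟩) else 0
  have f_apply (i : Fin n) : f (σ i) = c i := by simp [f]
  refine ⟨σ, f 0, fun k ↦ f (n - k) - f (n - k - 1), fun k hk ↦ ?_, fun i ↦ ?_⟩
  · have hk := mem_Ioo.1 hk
    have hlt : n - k < n := by omega
    have hlt' : n - k - 1 < n := by omega
    simp only [f, hlt, hlt', dif_pos, sub_nonneg]
    exact Tuple.monotone_sort c (Fin.mk_le_mk.2 (Nat.sub_le _ _))
  · have hreflect : ∑ k ∈ Ioo 0 n with i ∈ topSet σ k, (f (n - k) - f (n - k - 1)) =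
        ∑ j ∈ range (σ i), (f (j + 1) - f j) := by
      refine sum_nbij' (fun k ↦ n - k - 1) (fun j ↦ n - (j + 1)) ?_ ?_ ?_ ?_ ?_ <;>
        simp only [mem_filter, mem_Ioo, mem_topSet, mem_range]
      · omega
      · omega
      · omega
      · omega
      · rintro k ⟨hk, -⟩
        rw [Nat.sub_add_cancel (by omega)]
    rw [hreflect, sum_range_sub, f_apply, add_sub_cancel]

end TopSets

section ProperChains

/-- `C` is a chain of nonempty proper subsets of `U`, that is, a chain in the open interval
`(∅, U)` of the Boolean lattice. -/
structure IsProperChain {α : Type*} (U : Finset α) (C : Finset (Finset α)) : Prop where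
  isChain : IsChain (· ⊆ ·) (C : Set (Finset α))
  nonempty : ∀ T ∈ C, T.Nonempty
  ssubset : ∀ T ∈ C, T ⊂ U

lemma IsProperChain.mono {α : Type*} {U : Finset α} {C D : Finset (Finset α)}
    (hD : IsProperChain U D) (h : C ⊆ D) : IsProperChain U C :=
  ⟨hD.isChain.mono (coe_subset.2 h), fun T hT ↦ hD.nonempty T (h hT),
    fun T hT ↦ hD.ssubset T (h hT)⟩

lemma IsProperChain.notMem {α : Type*} {U : Finset α} {C : Finset (Finset α)}
    (hC : IsProperChain U C) : U ∉ C :=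
  fun h ↦ (hC.ssubset U h).ne rfl

variable {n : ℕ} {C : Finset (Finset (Fin n))}

lemma IsProperChain.card_mem_Ioo (hC : IsProperChain univ C) {T : Finset (Fin n)} (hT : T ∈ C) :
    #T ∈ Ioo 0 n :=
  mem_Ioo.2 ⟨(hC.nonempty T hT).card_pos, by simpa using card_lt_card (hC.ssubset T hT)⟩

/-- The maximal chain of proper nonempty subsets that corresponds to the permutation `σ`. -/
def topChain (σ : Equiv.Perm (Fin n)) : Finset (Finset (Fin n)) :=
  (Ioo 0 n).image (topSet σ)

lemma isProperChain_topChain (σ : Equiv.Perm (Fin n)) : IsProperChain univ (topChain σ) := by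
  have hcard {k : ℕ} (hk : k ∈ Ioo 0 n) : 0 < #(topSet σ k) ∧ #(topSet σ k) < n := by
    rw [card_topSet σ (mem_Ioo.1 hk).2.le]
    exact mem_Ioo.1 hk
  refine ⟨?_, forall_mem_image.2 fun k hk ↦ card_pos.1 (hcard hk).1, forall_mem_image.2 fun k hk ↦
    ssubset_univ_iff.2 fun h ↦ (hcard hk).2.ne (by simp [h])⟩
  rw [topChain, coe_image]
  rintro _ ⟨j, -, rfl⟩ _ ⟨k, -, rfl⟩ -
  exact (le_total j k).imp (topSet_mono σ ·) (topSet_mono σ ·)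

lemma card_topChain (σ : Equiv.Perm (Fin n)) : #(topChain σ) = n - 1 := by
  rw [topChain, card_image_of_injOn, Nat.card_Ioo, Nat.sub_zero]
  exact (topSet_injOn σ).mono fun k hk ↦ (mem_Ioo.1 hk).2.le

lemma IsProperChain.subset_topChain (hC : IsProperChain univ C) {σ : Equiv.Perm (Fin n)}
    (hσ : ∀ T ∈ C, topSet σ #T = T) : C ⊆ topChain σ :=
  fun T hT ↦ mem_image.2 ⟨#T, hC.card_mem_Ioo hT, hσ T hT⟩

end ProperChains

section Maximizers

lemma sum_lt_sum_of_card_eq {ι M : Type*} [AddCommMonoid M] [LinearOrder M]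
    [IsOrderedCancelAddMonoid M] {f : ι → M} {s t : Finset ι} (hcard : #s = #t) (hne : s ≠ t)
    (h : ∀ i ∈ s, i ∉ t → ∀ j ∈ t, j ∉ s → f i < f j) : ∑ i ∈ s, f i < ∑ i ∈ t, f i := by
  classical
  have hcard' : #(s \ t) = #(t \ s) := card_sdiff_comm hcard
  have hst : (s \ t).Nonempty :=
    sdiff_nonempty.2 fun hsub ↦ hne (eq_of_subset_of_card_le hsub hcard.ge)
  have hts : (t \ s).Nonempty := card_pos.1 (hcard' ▸ hst.card_pos)
  obtain ⟨j, hj, hmin⟩ := exists_min_image (t \ s) f hts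
  have hj' := mem_sdiff.1 hj
  rw [← sum_sdiff_lt_sum_sdiff]
  calc ∑ i ∈ s \ t, f i < ∑ _i ∈ s \ t, f j :=
        sum_lt_sum_of_nonempty hst fun i hi ↦
          h i (mem_sdiff.1 hi).1 (mem_sdiff.1 hi).2 j hj'.1 hj'.2
    _ = #(t \ s) • f j := by rw [sum_const, hcard']
    _ ≤ ∑ i ∈ t \ s, f i := card_nsmul_le_sum _ _ _ hmin

lemma setOf_isMax_add_sum_mul {E ι : Type*} {P : Set E} {s : Finset ι} {g b : ι → ℝ}
    {φ : ι → E → ℝ} {L : E → ℝ} {a : ℝ} {x₀ : E} (hg : ∀ k ∈ s, 0 ≤ g k)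
    (hφ : ∀ k ∈ s, ∀ x ∈ P, φ k x ≤ b k) (hL : ∀ x ∈ P, L x = a + ∑ k ∈ s, g k * φ k x)
    (hx₀ : x₀ ∈ P) (hφ₀ : ∀ k ∈ s, φ k x₀ = b k) :
    {x ∈ P | ∀ y ∈ P, L y ≤ L x} = {x ∈ P | ∀ k ∈ s, 0 < g k → φ k x = b k} := by
  have hterm : ∀ x ∈ P, ∀ k ∈ s, g k * φ k x ≤ g k * b k := fun x hx k hk ↦
    mul_le_mul_of_nonneg_left (hφ k hk x hx) (hg k hk)
  have hmax : L x₀ = a + ∑ k ∈ s, g k * b k := by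
    rw [hL x₀ hx₀, sum_congr rfl fun k hk ↦ by rw [hφ₀ k hk]]
  have hle : ∀ x ∈ P, L x ≤ L x₀ := fun x hx ↦ by
    rw [hmax, hL x hx]
    linarith [sum_le_sum (hterm x hx)]
  have heq : ∀ x ∈ P, L x = L x₀ ↔ ∀ k ∈ s, 0 < g k → φ k x = b k := fun x hx ↦ by
    rw [hmax, hL x hx, add_right_inj, sum_eq_sum_iff_of_le (hterm x hx)]
    refine forall₂_congr fun k hk ↦ ?_
    rw [mul_eq_mul_left_iff, (hg k hk).lt_iff_ne']
    tauto
  ext x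
  refine and_congr_right fun hx ↦ ?_
  rw [← heq x hx]
  exact ⟨fun h ↦ (hle x hx).antisymm (h x₀ hx₀), fun h y hy ↦ h ▸ hle y hy⟩

end Maximizers

section CoordSum

variable {n : ℕ}

/-- The linear functional `x ↦ ∑ i ∈ T, x i`. -/
def coordSum (T : Finset (Fin n)) : (Fin n → ℝ) →ₗ[ℝ] ℝ :=
  ∑ i ∈ T, LinearMap.proj i

@[simp]
lemma coordSum_apply (T : Finset (Fin n)) (x : Fin n → ℝ) : coordSum T x = ∑ i ∈ T, x i := by
  simp [coordSum]

/-- The sum of the last `k` entries of `v`; for monotone `v` these are its `k` largest entries. -/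
def topSum (v : Fin n → ℝ) (k : ℕ) : ℝ :=
  ∑ j ∈ topSet 1 k, v j

lemma sum_topSet_comp (v : Fin n → ℝ) (σ : Equiv.Perm (Fin n)) (k : ℕ) :
    ∑ i ∈ topSet σ k, v (σ i) = topSum v k := by
  simp [topSet_eq_map σ, topSum]

variable {v : Fin n → ℝ}

lemma sum_comp_lt_topSum (hv : StrictMono v) {σ : Equiv.Perm (Fin n)} {T : Finset (Fin n)}
    (hT : topSet σ #T ≠ T) : ∑ i ∈ T, v (σ i) < topSum v #T := by
  rw [← sum_topSet_comp v σ]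
  refine sum_lt_sum_of_card_eq (card_topSet σ (by simpa using card_le_univ T)).symm hT.symm
    fun i _ hi j hj _ ↦ hv (Fin.lt_def.2 ?_)
  rw [mem_topSet] at hi hj
  omega

lemma sum_comp_eq_topSum_iff (hv : StrictMono v) (σ : Equiv.Perm (Fin n)) (T : Finset (Fin n)) :
    ∑ i ∈ T, v (σ i) = topSum v #T ↔ topSet σ #T = T := by
  refine ⟨fun h ↦ by_contra fun hT ↦ (sum_comp_lt_topSum hv hT).ne h, fun h ↦ ?_⟩
  rw [← sum_topSet_comp v σ, h]

lemma comp_mem_permPoly (v : Fin n → ℝ) (σ : Equiv.Perm (Fin n)) : v ∘ σ ∈ permPoly v :=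
  subset_convexHull ℝ _ ⟨σ, rfl⟩

lemma coordSum_le_topSum (hv : StrictMono v) (T : Finset (Fin n)) {x : Fin n → ℝ}
    (hx : x ∈ permPoly v) : coordSum T x ≤ topSum v #T := by
  refine convexHull_min ?_ (convex_halfSpace_le (coordSum T).isLinear (topSum v #T)) hx
  rintro _ ⟨σ, rfl⟩
  rcases eq_or_ne (topSet σ #T) T with h | h
  · simpa using ((sum_comp_eq_topSum_iff hv σ T).2 h).le
  · simpa using (sum_comp_lt_topSum hv h).le

lemma coordSum_univ (v : Fin n → ℝ) {x : Fin n → ℝ} (hx : x ∈ permPoly v) :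
    coordSum univ x = ∑ i, v i := by
  refine convexHull_min ?_ (convex_hyperplane (coordSum univ).isLinear (∑ i, v i)) hx
  rintro _ ⟨σ, rfl⟩
  simpa using σ.sum_comp univ v (by simp)

end CoordSum

section Faces

variable {n : ℕ} {v : Fin n → ℝ} {C D : Finset (Finset (Fin n))}

/-- The face of `permPoly v` attached to a family `C` of coordinate sets: the points at which
every `∑ i ∈ T, x i` with `T ∈ C` is as large as possible. -/
def chainFace (v : Fin n → ℝ) (C : Finset (Finset (Fin n))) : Set (Fin n → ℝ) :=
  {x ∈ permPoly v | ∀ T ∈ C, coordSum T x = topSum v #T}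

lemma chainFace_empty (v : Fin n → ℝ) : chainFace v ∅ = permPoly v := by
  simp [chainFace]

lemma comp_mem_chainFace_iff (hv : StrictMono v) {σ : Equiv.Perm (Fin n)} :
    v ∘ σ ∈ chainFace v C ↔ ∀ T ∈ C, topSet σ #T = T := by
  simp [chainFace, comp_mem_permPoly, sum_comp_eq_topSum_iff hv]

lemma IsProperChain.chainFace_nonempty (hv : StrictMono v) (hC : IsProperChain univ C) :
    (chainFace v C).Nonempty := by
  obtain ⟨σ, hσ⟩ := exists_perm_topSet_card_eq hC.isChain
  exact ⟨v ∘ σ, (comp_mem_chainFace_iff hv).2 hσ⟩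

lemma IsProperChain.isExpFace_chainFace (hv : StrictMono v) (hC : IsProperChain univ C) :
    IsExpFace (permPoly v) (chainFace v C) := by
  obtain ⟨x₀, hx₀⟩ := hC.chainFace_nonempty hv
  refine ⟨⟨x₀, hx₀⟩, ∑ T ∈ C, coordSum T, ?_⟩
  rw [setOf_isMax_add_sum_mul (a := 0) (g := 1) (s := C) (φ := fun T x ↦ coordSum T x)
    (b := fun T ↦ topSum v #T) (by simp) (fun T _ x hx ↦ coordSum_le_topSum hv T hx) (by simp)
    hx₀.1 hx₀.2]
  simp [chainFace]

lemma linearMap_apply_eq_sum_topSet (L : (Fin n → ℝ) →ₗ[ℝ] ℝ) :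
    ∃ (σ : Equiv.Perm (Fin n)) (a : ℝ) (g : ℕ → ℝ), (∀ k ∈ Ioo 0 n, 0 ≤ g k) ∧
      ∀ x, L x = a * coordSum univ x + ∑ k ∈ Ioo 0 n, g k * coordSum (topSet σ k) x := by
  obtain ⟨σ, a, g, hg, hc⟩ := exists_perm_eq_add_sum_topSet fun i ↦ L (Pi.single i 1)
  refine ⟨σ, a, g, hg, fun x ↦ ?_⟩
  have hswap : ∑ i, x i * ∑ k ∈ Ioo 0 n with i ∈ topSet σ k, g k =
      ∑ k ∈ Ioo 0 n, g k * ∑ i ∈ topSet σ k, x i := by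
    simp_rw [mul_sum]
    rw [sum_comm' (t' := Ioo 0 n) (s' := topSet σ) (by simp [and_comm])]
    simp only [mul_comm]
  calc L x = ∑ i, x i * L (Pi.single i 1) := by
        convert! LinearMap.pi_apply_eq_sum_univ L x using 4 with i
        ext j
        simp [Pi.single_apply, eq_comm]
    _ = _ := by
        simp_rw [hc, mul_add, sum_add_distrib, hswap, ← sum_mul, coordSum_apply, mul_comm a]

lemma IsExpFace.exists_chainFace_eq (hv : StrictMono v) {A : Set (Fin n → ℝ)}
    (hA : IsExpFace (permPoly v) A) : ∃ C, IsProperChain univ C ∧ chainFace v C = A := by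
  obtain ⟨_, L, rfl⟩ := hA
  obtain ⟨σ, a, g, hg, hL⟩ := linearMap_apply_eq_sum_topSet L
  refine ⟨{k ∈ Ioo 0 n | 0 < g k}.image (topSet σ),
    (isProperChain_topChain σ).mono (image_subset_image (filter_subset _ _)), ?_⟩
  have hcard : ∀ k ∈ Ioo 0 n, #(topSet σ k) = k := fun k hk ↦ card_topSet σ (mem_Ioo.1 hk).2.le
  rw [setOf_isMax_add_sum_mul (φ := fun k x ↦ coordSum (topSet σ k) x)
    (b := fun k ↦ topSum v #(topSet σ k)) hg (fun k _ x hx ↦ coordSum_le_topSum hv _ hx)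
    (fun x hx ↦ by rw [hL, coordSum_univ v hx]) (comp_mem_permPoly v σ)
    fun k hk ↦ by
      rw [coordSum_apply]
      exact (sum_comp_eq_topSum_iff hv σ _).2 (by rw [hcard k hk])]
  simp only [chainFace, forall_mem_image, mem_filter, and_imp]

lemma chainFace_anti (h : C ⊆ D) : chainFace v D ⊆ chainFace v C :=
  fun _ hx ↦ ⟨hx.1, fun T hT ↦ hx.2 T (h hT)⟩

lemma IsProperChain.chainFace_subset_iff (hv : StrictMono v) (hC : IsProperChain univ C)
    (hD : IsProperChain univ D) : chainFace v C ⊆ chainFace v D ↔ D ⊆ C := by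
  refine ⟨fun h T hT ↦ ?_, chainFace_anti⟩
  by_contra hTC
  obtain ⟨hpos, hlt⟩ := mem_Ioo.1 (hD.card_mem_Ioo hT)
  obtain ⟨σ, hσ⟩ := exists_perm_topSet_card_eq hC.isChain
  obtain ⟨τ, hτT, hτ⟩ := exists_perm_topSet_ne σ hpos hlt
  have hσT : topSet σ #T = T :=
    (comp_mem_chainFace_iff hv).1 (h ((comp_mem_chainFace_iff hv).2 hσ)) T hT
  have hτC : ∀ U ∈ C, topSet τ #U = U := fun U hU ↦ by
    rw [hτ, hσ U hU]
    intro hcard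
    exact hTC (by rwa [← hσT, ← hcard, hσ U hU])
  exact hτT (((comp_mem_chainFace_iff hv).1
    (h ((comp_mem_chainFace_iff hv).2 hτC)) T hT).trans hσT.symm)

lemma chainFace_injOn (hv : StrictMono v) : Set.InjOn (chainFace v) {C | IsProperChain univ C} :=
  fun _ hC _ hD h ↦ ((hD.chainFace_subset_iff hv hC).1 h.ge).antisymm
    ((hC.chainFace_subset_iff hv hD).1 h.le)

end Faces

section Dimension

variable {n : ℕ}

lemma setDim_univ : setDim (Set.univ : Set (Fin n → ℝ)) = n := by
  rw [setDim, AffineSubspace.span_univ, AffineSubspace.direction_top, finrank_top,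
    Module.finrank_fin_fun]

lemma setDim_lt_setDim {A B : Set (Fin n → ℝ)} {φ : (Fin n → ℝ) →ₗ[ℝ] ℝ} {c : ℝ}
    (hA : A.Nonempty) (hAB : A ⊆ B) (hφA : ∀ x ∈ A, φ x = c) (hφB : ∃ x ∈ B, φ x ≠ c) :
    setDim A < setDim B := by
  obtain ⟨z, hzB, hz⟩ := hφB
  have hlevel : affineSpan ℝ A ≤ (AffineSubspace.mk' c ⊥).comap φ.toAffineMap :=
    affineSpan_le_of_subset_coe fun x hx ↦ by
      simp [AffineSubspace.mem_mk', hφA x hx]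
  have hzA : z ∉ affineSpan ℝ A := fun h ↦ hz <| by
    simpa [AffineSubspace.mem_comap, AffineSubspace.mem_mk', sub_eq_zero] using hlevel h
  refine Submodule.finrank_lt_finrank_of_lt (AffineSubspace.direction_lt_of_nonempty ?_ ?_)
  · exact lt_of_le_of_ne (affineSpan_mono ℝ hAB) fun h ↦ hzA (h ▸ subset_affineSpan ℝ B hzB)
  · exact hA.mono (subset_affineSpan ℝ A)

variable {v : Fin n → ℝ} {C D : Finset (Finset (Fin n))}

lemma setDim_permPoly_lt (hn : 0 < n) (v : Fin n → ℝ) : setDim (permPoly v) < n := by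
  have hφ : ∃ x ∈ Set.univ, coordSum univ x ≠ ∑ i, v i :=
    ⟨Pi.single ⟨0, hn⟩ (∑ i, v i + 1), Set.mem_univ _, by simp⟩
  simpa only [setDim_univ] using setDim_lt_setDim ⟨v, comp_mem_permPoly v 1⟩
    (Set.subset_univ _) (fun x hx ↦ coordSum_univ v hx) hφ

lemma IsProperChain.setDim_chainFace_lt (hv : StrictMono v) (hD : IsProperChain univ D)
    (h : C ⊂ D) : setDim (chainFace v D) < setDim (chainFace v C) := by
  have hnot : ¬ chainFace v C ⊆ chainFace v D := fun hsub ↦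
    h.not_subset (((hD.mono h.subset).chainFace_subset_iff hv hD).1 hsub)
  obtain ⟨x, hxC, hxD⟩ := Set.not_subset.1 hnot
  obtain ⟨T, hT, hxT⟩ : ∃ T ∈ D, coordSum T x ≠ topSum v #T := by
    by_contra! hall
    exact hxD ⟨hxC.1, hall⟩
  exact setDim_lt_setDim (hD.chainFace_nonempty hv) (chainFace_anti h.subset)
    (fun y hy ↦ hy.2 T hT) ⟨x, hxC, hxT⟩

lemma IsProperChain.setDim_chainFace_add_card_le (hv : StrictMono v) (hD : IsProperChain univ D)
    (h : C ⊆ D) : setDim (chainFace v D) + #D ≤ setDim (chainFace v C) + #C := by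
  induction D using Finset.strongInduction with
  | H D ih =>
    rcases h.eq_or_ssubset with rfl | hss
    · rfl
    obtain ⟨T, hTD, hTC⟩ := exists_of_ssubset hss
    have hlt := hD.setDim_chainFace_lt hv (erase_ssubset hTD)
    have hle := ih _ (erase_ssubset hTD) (hD.mono (erase_subset T D)) (subset_erase.2 ⟨h, hTC⟩)
    rw [card_erase_of_mem hTD] at hle
    omega

lemma IsProperChain.setDim_chainFace_add_card (hn : 0 < n) (hv : StrictMono v)
    (hC : IsProperChain univ C) : setDim (chainFace v C) + #C + 1 = n := by
  obtain ⟨σ, hσ⟩ := exists_perm_topSet_card_eq hC.isChain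
  have hlower := (isProperChain_topChain σ).setDim_chainFace_add_card_le hv
    (hC.subset_topChain hσ)
  have hupper := hC.setDim_chainFace_add_card_le hv (empty_subset C)
  have hwhole := setDim_permPoly_lt hn v
  rw [card_topChain] at hlower
  rw [chainFace_empty, card_empty] at hupper
  omega

end Dimension

end Geometry

section Multichains

open Finset

open Classical in
lemma sum_antitone_prod_pow_card_sub {α R : Type*} [Fintype α] [DecidableEq α] [CommSemiring R]
    {l : ℕ} (x : Fin l → R) (C : Finset α) :
    ∑ K : Fin (l + 1) → Finset α with Antitone K ∧ K 0 = C,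
      ∏ i : Fin l, x i ^ (#(K i.castSucc) - #(K i.succ)) = (∑ i, x i + 1) ^ #C := by
  induction l generalizing C with
  | zero =>
    have hsingle : ({K : Fin (0 + 1) → Finset α | Antitone K ∧ K 0 = C} : Finset _) =
        {fun _ ↦ C} := by
      ext K
      have hanti : Antitone K := Fin.antitone_iff_succ_le.2 fun i ↦ i.elim0
      simp [hanti, funext_iff]
    rw [hsingle]
    simp
  | succ l ih =>
    calc _ = ∑ K : Fin (l + 1) → Finset α with Antitone K ∧ K 0 ⊆ C,
          x 0 ^ (#C - #(K 0)) * ∏ i : Fin l, x i.succ ^ (#(K i.castSucc) - #(K i.succ)) := by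
          refine sum_nbij' Fin.tail (Matrix.vecCons C) ?_ ?_ ?_ ?_ ?_ <;>
            simp only [mem_filter_univ]
          · rintro K ⟨hK, rfl⟩
            exact ⟨hK.comp_monotone (Fin.strictMono_succ (n := l + 1)).monotone, hK (Fin.zero_le _)⟩
          · rintro K ⟨hK, hKC⟩
            exact ⟨antitone_vecCons.2 ⟨hKC, hK⟩, rfl⟩
          · rintro K ⟨-, rfl⟩
            exact Fin.cons_self_tail K
          · exact fun K _ ↦ Fin.tail_cons (α := fun _ ↦ Finset α) C K
          · rintro K ⟨-, rfl⟩
            exact Fin.prod_univ_succ _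
      _ = ∑ D ∈ C.powerset, (∑ i : Fin l, x i.succ + 1) ^ #D * x 0 ^ (#C - #D) := by
          rw [← sum_fiberwise_of_maps_to (g := fun K ↦ K 0) (t := C.powerset)
            fun K hK ↦ mem_powerset.2 (mem_filter_univ K |>.1 hK).2]
          refine sum_congr rfl fun D hD ↦ ?_
          rw [← ih (fun i ↦ x i.succ) D, mul_comm, mul_sum, filter_filter]
          refine sum_congr (filter_congr fun K _ ↦ ?_) fun K hK ↦ ?_
          · exact ⟨fun h ↦ ⟨h.1.1, h.2⟩, fun h ↦ ⟨⟨h.1, h.2 ▸ mem_powerset.1 hD⟩, h.2⟩⟩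
          · rw [((mem_filter_univ K).1 hK).2]
      _ = (∑ i, x i + 1) ^ #C := by
          rw [sum_pow_mul_eq_add_pow, Fin.sum_univ_succ]
          ring

end Multichains

section CountingChains

open Finset
open scoped Nat
open Nat (stirlingSecond)

variable {α : Type*} [DecidableEq α] {T U : Finset α} {C : Finset (Finset α)}

lemma sum_ssubsets_add_apply_card {M : Type*} [AddCommMonoid M] (f : ℕ → M) (U : Finset α) :
    ∑ T ∈ U.ssubsets, f #T + f #U = ∑ j ∈ range (#U + 1), (#U).choose j • f j := by
  rw [← sum_powerset_apply_card, add_comm, ssubsets]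
  exact add_sum_erase _ (fun T ↦ f #T) (mem_powerset_self U)

namespace IsProperChain

lemma sup_id_mem (hC : IsProperChain U C) (hne : C.Nonempty) : C.sup id ∈ C := by
  rw [← sup'_eq_sup hne]
  refine sup'_mem (C : Set (Finset α)) (fun S hS T hT ↦ ?_) C hne id fun _ hT ↦ hT
  rcases hC.isChain.total hS hT with h | h
  · rwa [sup_eq_right.2 h]
  · rwa [sup_eq_left.2 h]

lemma erase_sup_id (hC : IsProperChain U C) : IsProperChain (C.sup id) (C.erase (C.sup id)) where
  isChain := hC.isChain.mono (coe_subset.2 (erase_subset _ _))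
  nonempty T hT := hC.nonempty T (mem_of_mem_erase hT)
  ssubset _ hT := (le_sup (f := id) (mem_of_mem_erase hT)).lt_of_ne (ne_of_mem_erase hT)

lemma insert (hC : IsProperChain T C) (hT : T.Nonempty) (hTU : T ⊂ U) :
    IsProperChain U (Insert.insert T C) where
  isChain := by
    rw [coe_insert]
    exact hC.isChain.insert fun S hS _ ↦ .inr (hC.ssubset S hS).subset
  nonempty := forall_mem_insert _ _ _ |>.2 ⟨hT, hC.nonempty⟩
  ssubset := forall_mem_insert _ _ _ |>.2 ⟨hTU, fun S hS ↦ (hC.ssubset S hS).trans hTU⟩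

lemma sup_id_insert (hC : IsProperChain T C) : (Insert.insert T C).sup id = T := by
  rw [sup_insert, id, sup_eq_left]
  exact Finset.sup_le fun S hS ↦ (hC.ssubset S hS).le

end IsProperChain

open Classical in
/-- The finset of chains of `k` nonempty proper subsets of `U`. -/
noncomputable def properChains (U : Finset α) (k : ℕ) : Finset (Finset (Finset α)) :=
  {C ∈ U.ssubsets.powerset | IsProperChain U C ∧ #C = k}

lemma mem_properChains {k : ℕ} : C ∈ properChains U k ↔ IsProperChain U C ∧ #C = k := by
  classical
  rw [properChains, mem_filter, mem_powerset, and_iff_right_iff_imp]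
  exact fun h T hT ↦ mem_ssubsets.2 (h.1.ssubset T hT)

lemma properChains_zero (U : Finset α) : properChains U 0 = {∅} := by
  ext C
  rw [mem_properChains, card_eq_zero, mem_singleton, and_iff_right_iff_imp]
  rintro rfl
  exact ⟨by simp, by simp, by simp⟩

lemma card_properChains_sup_eq (k : ℕ) (hT : T.Nonempty) (hTU : T ⊂ U) :
    #{C ∈ properChains U (k + 1) | C.sup id = T} = #(properChains T k) := by
  refine card_bij' (fun C _ ↦ C.erase T) (fun C _ ↦ insert T C) ?_ ?_ ?_ ?_
  · intro C hC
    rw [mem_filter, mem_properChains] at hC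
    obtain ⟨⟨hC, hk⟩, rfl⟩ := hC
    refine mem_properChains.2 ⟨hC.erase_sup_id, ?_⟩
    rw [card_erase_of_mem (hC.sup_id_mem (card_pos.1 (by omega))), hk, Nat.add_sub_cancel]
  · intro C hC
    rw [mem_properChains] at hC
    obtain ⟨hC, rfl⟩ := hC
    exact mem_filter.2 ⟨mem_properChains.2 ⟨hC.insert hT hTU, card_insert_of_notMem hC.notMem⟩,
      hC.sup_id_insert⟩
  · intro C hC
    rw [mem_filter, mem_properChains] at hC
    obtain ⟨⟨hC, hk⟩, rfl⟩ := hC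
    exact insert_erase (hC.sup_id_mem (card_pos.1 (by omega)))
  · exact fun C hC ↦ erase_insert (mem_properChains.1 hC).1.notMem

lemma card_properChains_succ (U : Finset α) (k : ℕ) :
    #(properChains U (k + 1)) = ∑ T ∈ U.ssubsets with T.Nonempty, #(properChains T k) := by
  have hmaps : Set.MapsTo (fun C ↦ C.sup id) (properChains U (k + 1) : Set (Finset (Finset α)))
      ({T ∈ U.ssubsets | T.Nonempty} : Finset (Finset α)) := fun C hC ↦ by
    obtain ⟨hC, hk⟩ := mem_properChains.1 hC
    have hmem := hC.sup_id_mem (card_pos.1 (by omega))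
    exact mem_filter.2 ⟨mem_ssubsets.2 (hC.ssubset _ hmem), hC.nonempty _ hmem⟩
  rw [card_eq_sum_card_fiberwise hmaps]
  refine sum_congr rfl fun T hT ↦ ?_
  obtain ⟨hTU, hT⟩ := mem_filter.1 hT
  exact card_properChains_sup_eq k hT (mem_ssubsets.1 hTU)

lemma card_properChains (hU : U.Nonempty) (k : ℕ) :
    #(properChains U k) = (k + 1)! * stirlingSecond #U (k + 1) := by
  induction k generalizing U with
  | zero =>
    obtain ⟨n, hn⟩ := Nat.exists_eq_succ_of_ne_zero hU.card_ne_zero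
    simp [properChains_zero, hn, Nat.stirlingSecond_one_right]
  | succ k ih =>
    have hempty : ∀ T ∈ U.ssubsets, stirlingSecond #T (k + 1) ≠ 0 → T.Nonempty :=
      fun T _ hT ↦ nonempty_iff_ne_empty.2 fun h ↦ hT (by simp [h])
    have hsum : ∑ T ∈ U.ssubsets, stirlingSecond #T (k + 1) =
        (k + 2) * stirlingSecond #U (k + 2) := by
      rw [← sum_range_choose_mul_stirlingSecond]
      have h := sum_ssubsets_add_apply_card (stirlingSecond · (k + 1)) U
      rw [sum_range_succ, Nat.choose_self, one_smul] at h
      exact Nat.add_right_cancel h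
    calc #(properChains U (k + 1))
        = ∑ T ∈ U.ssubsets with T.Nonempty, (k + 1)! * stirlingSecond #T (k + 1) := by
          rw [card_properChains_succ]
          exact sum_congr rfl fun T hT ↦ ih (mem_filter.1 hT).2
      _ = (k + 1)! * ((k + 2) * stirlingSecond #U (k + 2)) := by
          rw [← mul_sum, sum_filter_of_ne hempty, hsum]
      _ = (k + 2)! * stirlingSecond #U (k + 2) := by
          rw [Nat.factorial_succ (k + 1)]
          ring

end CountingChains

section FlagPolynomial

open Finset
open scoped Nat
open Nat (stirlingSecond)

lemma IsProperChain.card_le {n : ℕ} {C : Finset (Finset (Fin (n + 1)))}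
    (hC : IsProperChain univ C) : #C ≤ n := by
  obtain ⟨σ, hσ⟩ := exists_perm_topSet_card_eq hC.isChain
  simpa only [card_topChain, Nat.add_sub_cancel] using card_le_card (hC.subset_topChain hσ)

lemma sum_isProperChain_apply_card {n : ℕ} {M : Type*} [AddCommMonoid M] (f : ℕ → M)
    [DecidablePred (IsProperChain (univ : Finset (Fin (n + 1))))] :
    ∑ C with IsProperChain (univ : Finset (Fin (n + 1))) C, f #C =
      ∑ k ∈ range (n + 1), ((k + 1)! * stirlingSecond (n + 1) (k + 1)) • f k := by
  rw [← sum_fiberwise_of_maps_to' (g := card) (t := range (n + 1)) fun C hC ↦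
    mem_range_succ_iff.2 ((mem_filter_univ C).1 hC).card_le]
  refine sum_congr rfl fun k _ ↦ ?_
  have hfiber : ({C ∈ {C | IsProperChain (univ : Finset (Fin (n + 1))) C} | #C = k} : Finset _) =
      properChains univ k := by
    ext C
    simp [mem_properChains]
  rw [sum_const, hfiber, card_properChains univ_nonempty, card_univ, Fintype.card_fin]

lemma xiFlag_eq_sum_monotone {n : ℕ} (P : Set (Fin n → ℝ)) (l : ℕ) (x : Fin (l + 1) → ℝ) :
    xiFlag P l x = ∑ s : Fin (l + 1) → Fin n with Monotone s,
      flagCount P (l + 1) (fun i ↦ s i) * (x 0 ^ (s 0 : ℕ) / (n - s 0 : ℕ)! *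
        ∏ i : Fin l, x i.succ ^ (s i.succ - s i.castSucc : ℕ)) := by
  rw [xiFlag, sum_filter]
  refine sum_congr rfl fun s _ ↦ if_congr Iff.rfl ?_ rfl
  have hpred (i : Fin l) : (⟨(i.succ : Fin (l + 1)) - 1,
      lt_of_le_of_lt (Nat.sub_le _ _) i.succ.isLt⟩ : Fin (l + 1)) = i.castSucc := rfl
  simp only [Fin.prod_univ_succ, hpred, Fin.val_eq_zero_iff, Fin.succ_ne_zero, if_true, if_false]
  ring

variable {n l : ℕ} {v : Fin (n + 1) → ℝ}

open Classical in
lemma flagCount_permPoly (hv : StrictMono v) (s : Fin l → ℕ) :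
    flagCount (permPoly v) l s = #{K : Fin l → Finset (Finset (Fin (n + 1))) |
      Antitone K ∧ ∀ i, IsProperChain univ (K i) ∧ #(K i) + s i = n} := by
  have hdim {C : Finset (Finset (Fin (n + 1)))} (hC : IsProperChain univ C) {d : ℕ} :
      setDim (chainFace v C) = d ↔ #C + d = n := by
    have := hC.setDim_chainFace_add_card n.succ_pos hv
    omega
  rw [flagCount, ← Fintype.card_subtype, ← Nat.card_eq_fintype_card]
  refine (Nat.card_congr (.ofBijective (fun K ↦ ⟨fun i ↦ chainFace v (K.1 i),
    fun i ↦ ⟨(K.2.2 i).1.isExpFace_chainFace hv, (hdim (K.2.2 i).1).2 (K.2.2 i).2⟩,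
    fun i j hij ↦ chainFace_anti (K.2.1 hij)⟩) ⟨?_, ?_⟩)).symm
  · rintro ⟨K, hK⟩ ⟨K', hK'⟩ h
    exact Subtype.ext <| funext fun i ↦
      chainFace_injOn hv (hK.2 i).1 (hK'.2 i).1 (congrFun (Subtype.ext_iff.1 h) i)
  · rintro ⟨A, hA, hmono⟩
    choose K hK hKA using fun i ↦ (hA i).1.exists_chainFace_eq hv
    refine ⟨⟨K, fun i j hij ↦ ?_, fun i ↦ ⟨hK i, ?_⟩⟩, Subtype.ext (funext hKA)⟩
    · rw [← (hK i).chainFace_subset_iff hv (hK j), hKA, hKA]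
      exact hmono i j hij
    · rw [← hdim (hK i), hKA, (hA i).2]

/-- The dimensions of the faces `chainFace v (K i)`, when each `K i` is a chain of proper nonempty
subsets. -/
def faceDims (K : Fin l → Finset (Finset (Fin (n + 1)))) (i : Fin l) : Fin (n + 1) :=
  ⟨n - #(K i), by omega⟩

lemma monotone_faceDims {K : Fin l → Finset (Finset (Fin (n + 1)))} (hK : Antitone K) :
    Monotone (faceDims K) :=
  fun _ _ hij ↦ Nat.sub_le_sub_left (card_le_card (hK hij)) n

lemma IsProperChain.of_antitone {K : Fin (l + 1) → Finset (Finset (Fin (n + 1)))}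
    (hK : Antitone K) (hK₀ : IsProperChain univ (K 0)) (i : Fin (l + 1)) :
    IsProperChain univ (K i) :=
  hK₀.mono (hK (Fin.zero_le i))

lemma isProperChain_zero_and_faceDims_eq_iff {K : Fin (l + 1) → Finset (Finset (Fin (n + 1)))}
    (hK : Antitone K) (s : Fin (l + 1) → Fin (n + 1)) :
    IsProperChain univ (K 0) ∧ faceDims K = s ↔
      ∀ i, IsProperChain univ (K i) ∧ #(K i) + s i = n := by
  refine ⟨?_, fun h ↦ ⟨(h 0).1, funext fun i ↦ Fin.ext ?_⟩⟩
  · rintro ⟨hK₀, rfl⟩ i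
    exact ⟨.of_antitone hK hK₀ i, Nat.add_sub_of_le (IsProperChain.of_antitone hK hK₀ i).card_le⟩
  · have := (h i).2
    simp only [faceDims]
    omega

open Classical in
lemma xiFlag_permPoly_eq_sum_antitone (hv : StrictMono v) (x : Fin (l + 1) → ℝ) :
    xiFlag (permPoly v) l x =
      ∑ K : Fin (l + 1) → Finset (Finset (Fin (n + 1))) with Antitone K ∧ IsProperChain univ (K 0),
        x 0 ^ (n - #(K 0)) / (#(K 0) + 1)! *
          ∏ i : Fin l, x i.succ ^ (#(K i.castSucc) - #(K i.succ)) := by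
  have hmaps : ∀ K ∈ ({K | Antitone K ∧ IsProperChain univ (K 0)} : Finset _),
      faceDims K ∈ ({s | Monotone s} : Finset (Fin (l + 1) → Fin (n + 1))) := fun K hK ↦ by
    rw [mem_filter_univ] at hK ⊢
    exact monotone_faceDims hK.1
  have hfiber (s : Fin (l + 1) → Fin (n + 1)) :
      ({K ∈ {K | Antitone K ∧ IsProperChain univ (K 0)} | faceDims K = s} : Finset _) =
        ({K | Antitone K ∧ ∀ i, IsProperChain univ (K i) ∧ #(K i) + s i = n} : Finset _) := by
    ext K
    rw [filter_filter, mem_filter_univ, mem_filter_univ, and_assoc]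
    exact and_congr_right fun hK ↦ isProperChain_zero_and_faceDims_eq_iff hK s
  rw [xiFlag_eq_sum_monotone]
  simp_rw [flagCount_permPoly hv, ← hfiber, ← nsmul_eq_mul, ← sum_const]
  rw [sum_fiberwise_of_maps_to' hmaps]
  refine sum_congr rfl fun K hK ↦ ?_
  rw [mem_filter_univ] at hK
  have hcard (i : Fin (l + 1)) : #(K i) ≤ n := (IsProperChain.of_antitone hK.1 hK.2 i).card_le
  have hcodim : n + 1 - faceDims K 0 = #(K 0) + 1 := by
    have := hcard 0
    simp only [faceDims]
    omega
  have hstep (i : Fin l) :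
      (faceDims K i.succ - faceDims K i.castSucc : ℕ) = #(K i.castSucc) - #(K i.succ) := by
    have := hcard i.castSucc
    simp only [faceDims]
    omega
  simp only [hcodim, hstep]
  rfl

open Classical in
lemma xiFlag_permPoly_eq_sum_isProperChain (hv : StrictMono v) (x : Fin (l + 1) → ℝ) :
    xiFlag (permPoly v) l x = ∑ C with IsProperChain (univ : Finset (Fin (n + 1))) C,
      x 0 ^ (n - #C) / (#C + 1)! * (∑ i : Fin l, x i.succ + 1) ^ #C := by
  have hmaps : ∀ K ∈ ({K | Antitone K ∧ IsProperChain univ (K 0)} :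
      Finset (Fin (l + 1) → Finset (Finset (Fin (n + 1))))),
      K 0 ∈ ({C | IsProperChain univ C} : Finset _) := fun K hK ↦ by
    rw [mem_filter_univ] at hK ⊢
    exact hK.2
  rw [xiFlag_permPoly_eq_sum_antitone hv, ← sum_fiberwise_of_maps_to hmaps]
  refine sum_congr rfl fun C hC ↦ ?_
  rw [mem_filter_univ] at hC
  rw [← sum_antitone_prod_pow_card_sub (fun i ↦ x i.succ) C, mul_sum, filter_filter]
  refine sum_congr (filter_congr fun K _ ↦ ?_) fun K hK ↦ ?_
  · exact ⟨fun h ↦ ⟨h.1.1, h.2⟩, fun h ↦ ⟨⟨h.1, h.2 ▸ hC⟩, h.2⟩⟩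
  · rw [((mem_filter_univ K).1 hK).2]

theorem xiFlag_permPoly (hv : StrictMono v) (x : Fin (l + 1) → ℝ) :
    xiFlag (permPoly v) l x = ∑ k ∈ range (n + 1),
      stirlingSecond (n + 1) (k + 1) * (x 0 ^ (n - k) * (∑ i : Fin l, x i.succ + 1) ^ k) := by
  classical
  rw [xiFlag_permPoly_eq_sum_isProperChain hv, sum_isProperChain_apply_card
    fun k ↦ x 0 ^ (n - k) / (k + 1)! * (∑ i : Fin l, x i.succ + 1) ^ k]
  refine sum_congr rfl fun k _ ↦ ?_
  rw [nsmul_eq_mul, Nat.cast_mul]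
  field_simp

end FlagPolynomial

section GeneratingFunction

open Finset

lemma xiFlag_permPoly_eq_touchard {n l : ℕ} {v : Fin (n + 1) → ℝ} (hv : StrictMono v)
    {x : Fin (l + 1) → ℝ} (hx : x 0 ≠ 0) {S : ℝ} (hS : S = ∑ i : Fin l, x i.succ + 1)
    (hS0 : S ≠ 0) :
    xiFlag (permPoly v) l x = x 0 ^ (n + 1) * touchard (n + 1) (S / x 0) / S := by
  rw [xiFlag_permPoly hv, ← hS, pow_mul_touchard_succ n hx, mul_div_cancel_left₀ _ hS0]

lemma stdPermutahedron_eq_permPoly (n : ℕ) :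
    stdPermutahedron n = permPoly fun i ↦ (i : ℝ) + 1 := by
  simp only [stdPermutahedron, permPoly, funext_iff, Function.comp_apply]

lemma strictMono_val_add_one (n : ℕ) : StrictMono fun i : Fin n ↦ (i : ℝ) + 1 :=
  fun i j hij ↦ by simpa using hij

theorem exp_flag_genFun_stdPermutahedron_general {v : ∀ m : ℕ, Fin (m + 1) → ℝ}
    (hv : ∀ m, StrictMono (v m)) (l : ℕ) (x : Fin (l + 1) → ℝ) (hx : x 0 ≠ 0) (S : ℝ)
    (hS : S = (∑ i ∈ univ.filter (fun i : Fin (l + 1) => i ≠ 0), x i) + 1) (hS0 : S ≠ 0) (y : ℝ) :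
    (Summable fun m : ℕ ↦
      |xiFlag (permPoly (v m)) l x * y ^ (m + 1) / Nat.factorial (m + 1)|) ∧
    ∑' m : ℕ, xiFlag (permPoly (v m)) l x * y ^ (m + 1) / Nat.factorial (m + 1)
      = (Real.exp (S / x 0 * (Real.exp (x 0 * y) - 1)) - 1) / S := by
  have hS' : S = ∑ i : Fin l, x i.succ + 1 := by
    rw [hS, sum_filter, Fin.sum_univ_succ]
    simp
  have hsum : HasSum
      (fun m : ℕ ↦ xiFlag (permPoly (v m)) l x * y ^ (m + 1) / Nat.factorial (m + 1))
      ((Real.exp (S / x 0 * (Real.exp (x 0 * y) - 1)) - 1) / S) := by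
    refine ((hasSum_touchard_succ_mul (S / x 0) (x 0 * y)).div_const S).congr_fun fun m ↦ ?_
    rw [xiFlag_permPoly_eq_touchard (hv m) hx hS' hS0, mul_pow]
    ring
  exact ⟨hsum.summable.abs, hsum.tsum_eq⟩

end GeneratingFunction

/-- the exponential generating function of the exponential
ℓ-flag polynomials of the standard permutahedra Π_{n−1}, n ≥ 1, converges
absolutely and equals (e^{(S/x₁)(e^{x₁y}−1)} − 1)/S, S = x₂+⋯+x_ℓ+1.
(Here ℓ = l+1 ≥ 1 and x₁ = x 0.) -/
theorem exp_flag_genFun_stdPermutahedron (l : ℕ) (x : Fin (l + 1) → ℝ)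
    (hx : x 0 ≠ 0) (S : ℝ)
    (hS : S = (∑ i ∈ Finset.univ.filter (fun i : Fin (l + 1) => i ≠ 0), x i) + 1)
    (hS0 : S ≠ 0) (y : ℝ) :
    (Summable fun m : ℕ =>
      |xiFlag (stdPermutahedron (m + 1)) l x * y ^ (m + 1) / Nat.factorial (m + 1)|) ∧
    ∑' m : ℕ, xiFlag (stdPermutahedron (m + 1)) l x * y ^ (m + 1) / Nat.factorial (m + 1)
      = (Real.exp (S / x 0 * (Real.exp (x 0 * y) - 1)) - 1) / S := by
  simpa only [stdPermutahedron_eq_permPoly] using exp_flag_genFun_stdPermutahedron_general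
    (fun m ↦ strictMono_val_add_one (m + 1)) l x hx S hS hS0 y
end
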